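/- (Normal rank of the Popov function.) Let X be a symmetric solution of CGCARE(Σ), and for s ∈ ℂ with s I_n − A invertible set T_X(s) = I_m + R† S_Xᵀ (s I_n − A)⁻¹ B. Then for every s ∈ ℂ such that s I_n − A, −s I_n − Aᵀ, T_X(s) and T_X(−s) are all invertible, the Popov function Φ(s) = Bᵀ(−s I_n − Aᵀ)⁻¹ Q (s I_n − A)⁻¹ B + Bᵀ(−s I_n − Aᵀ)⁻¹ S + Sᵀ (s I_n − A)⁻¹ B + R satisfies rank Φ(s) = rank R. -/

import Mathlib

/-!
The Popov function does not change when `(Q, S)` is replaced by `(Q + X A + Aᵀ X, S + X B)` with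
`X` symmetric. If `X` solves the Riccati equation, the new pair is `(W R† Wᵀ, W)` with
`W = S + X B`, and since `W` vanishes on `ker R` the square can be completed:
`Φ(s) = T_X(-s)ᵀ R T_X(s)`. Hence `Φ(s)` and `R` have equal rank wherever both outer factors are
invertible.
-/

open Matrix

/-- Entrywise embedding of a real matrix into the complex matrices. -/
def cm {α β : Type*} (M : Matrix α β ℝ) : Matrix α β ℂ := M.map Complex.ofReal

lemma mul_mul_eq_of_ker_le {K m p q : Type*} [Ring K] [Fintype m] [Fintype q]
    {R : Matrix q m K} {Rd : Matrix m q K} {W : Matrix p m K} (hRd : R * Rd * R = R)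
    (hker : ∀ v : m → K, R *ᵥ v = 0 → W *ᵥ v = 0) : W * Rd * R = W := by
  classical
  refine ext_of_mulVec_single fun j => ?_
  have hcol : R *ᵥ ((Rd * R) *ᵥ Pi.single j 1 - Pi.single j 1) = 0 := by
    rw [mulVec_sub, mulVec_mulVec, ← Matrix.mul_assoc, hRd, sub_self]
  rw [← sub_eq_zero, Matrix.mul_assoc, ← mulVec_mulVec, ← mulVec_sub, hker _ hcol]

section PopovFunction

variable {K n m p : Type*} [CommRing K] [Fintype n] [DecidableEq n]

/-- The Popov function `Φ(s)` of the system `(A, B)` with Popov matrix `[[Q, S], [Sᵀ, R]]`, over an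
arbitrary commutative ring. As in `Matrix.inv`, an inverse that does not exist is read as `0`. -/
noncomputable def popovFunction (A Q : Matrix n n K) (B S : Matrix n m K) (R : Matrix m m K)
    (s : K) : Matrix m m K :=
  Bᵀ * ((-s) • (1 : Matrix n n K) - Aᵀ)⁻¹ * Q * (s • (1 : Matrix n n K) - A)⁻¹ * B
    + Bᵀ * ((-s) • (1 : Matrix n n K) - Aᵀ)⁻¹ * S
    + Sᵀ * (s • (1 : Matrix n n K) - A)⁻¹ * B
    + R

/-- The return difference `I + F (s I - A)⁻¹ B` of the state feedback `u = -F x`; the matrix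
`T_X(s)` is the case `F = R† (S + X B)ᵀ`. -/
noncomputable def returnDifference [DecidableEq m] (A : Matrix n n K) (B : Matrix n m K)
    (F : Matrix m n K) (s : K) : Matrix m m K :=
  1 + F * (s • (1 : Matrix n n K) - A)⁻¹ * B

lemma resolvent_mul_sylvester_mul_resolvent [Fintype p] [DecidableEq p] (A : Matrix n n K)
    (C : Matrix p p K) (X : Matrix p n K) (s : K) (hA : IsUnit (s • (1 : Matrix n n K) - A).det)
    (hC : IsUnit ((-s) • (1 : Matrix p p K) - C).det) :
    ((-s) • (1 : Matrix p p K) - C)⁻¹ * (X * A + C * X) * (s • (1 : Matrix n n K) - A)⁻¹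
      = -(((-s) • (1 : Matrix p p K) - C)⁻¹ * X + X * (s • (1 : Matrix n n K) - A)⁻¹) := by
  have split : X * A + C * X
      = -(X * (s • (1 : Matrix n n K) - A) + ((-s) • (1 : Matrix p p K) - C) * X) := by
    simp only [Matrix.mul_sub, Matrix.sub_mul, Matrix.mul_smul, Matrix.smul_mul, Matrix.mul_one,
      Matrix.one_mul, neg_smul, Matrix.neg_mul]
    abel
  rw [split, Matrix.mul_neg, Matrix.neg_mul, Matrix.mul_add, Matrix.add_mul, ← Matrix.mul_assoc,
    mul_nonsing_inv_cancel_right _ _ hA, nonsing_inv_mul_cancel_left _ _ hC]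

lemma popovFunction_add_lyapunov (A Q : Matrix n n K) (B S : Matrix n m K) (R : Matrix m m K)
    {X : Matrix n n K} (hX : X.IsSymm) (s : K) (hA : IsUnit (s • (1 : Matrix n n K) - A).det)
    (hA' : IsUnit ((-s) • (1 : Matrix n n K) - Aᵀ).det) :
    popovFunction A (Q + (X * A + Aᵀ * X)) B (S + X * B) R s = popovFunction A Q B S R s := by
  have sandwich := resolvent_mul_sylvester_mul_resolvent A Aᵀ X s hA hA'
  unfold popovFunction
  set G := (s • (1 : Matrix n n K) - A)⁻¹
  set H := ((-s) • (1 : Matrix n n K) - Aᵀ)⁻¹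
  have lyapunov : Bᵀ * H * (X * A + Aᵀ * X) * G * B = -(Bᵀ * H * (X * B) + Bᵀ * X * G * B) := by
    calc Bᵀ * H * (X * A + Aᵀ * X) * G * B
        = Bᵀ * (H * (X * A + Aᵀ * X) * G) * B := by simp only [Matrix.mul_assoc]
      _ = -(Bᵀ * H * (X * B) + Bᵀ * X * G * B) := by
        rw [sandwich]
        simp only [Matrix.mul_neg, Matrix.neg_mul, Matrix.mul_add, Matrix.add_mul,
          Matrix.mul_assoc]
  rw [Matrix.mul_add (Bᵀ * H) Q, Matrix.add_mul, Matrix.add_mul, lyapunov, Matrix.mul_add,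
    transpose_add, transpose_mul, hX.eq, Matrix.add_mul, Matrix.add_mul]
  abel

variable [Fintype m] [DecidableEq m]

lemma popovFunction_eq_transpose_returnDifference_mul_mul (A : Matrix n n K) (B W : Matrix n m K)
    {R Rd : Matrix m m K} (hR : R.IsSymm) (hW : W * Rdᵀ * R = W) (s : K) :
    popovFunction A (W * Rd * Wᵀ) B W R s
      = (returnDifference A B (Rd * Wᵀ) (-s))ᵀ * R * returnDifference A B (Rd * Wᵀ) s := by
  unfold popovFunction returnDifference
  set G := (s • (1 : Matrix n n K) - A)⁻¹
  set H := ((-s) • (1 : Matrix n n K) - Aᵀ)⁻¹ with hH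
  have left : (1 + Rd * Wᵀ * ((-s) • (1 : Matrix n n K) - A)⁻¹ * B)ᵀ * R = R + Bᵀ * H * W := by
    calc (1 + Rd * Wᵀ * ((-s) • (1 : Matrix n n K) - A)⁻¹ * B)ᵀ * R
        = R + Bᵀ * H * (W * Rdᵀ * R) := by
          simp [hH, transpose_nonsing_inv, Matrix.add_mul, Matrix.mul_assoc]
      _ = R + Bᵀ * H * W := by rw [hW]
  have right : R * (Rd * Wᵀ * G * B) = Wᵀ * G * B := by
    have hW' : R * (Rd * Wᵀ) = Wᵀ := by simpa [hR.eq] using congrArg transpose hW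
    rw [← Matrix.mul_assoc, ← Matrix.mul_assoc, hW']
  rw [left, Matrix.mul_add, Matrix.mul_one, Matrix.add_mul, right]
  simp only [Matrix.mul_assoc]
  abel

theorem popovFunction_factorization {A Q : Matrix n n K} {B S : Matrix n m K} {R Rd : Matrix m m K}
    {X : Matrix n n K} (hR : R.IsSymm) (hX : X.IsSymm)
    (hgcare : X * A + Aᵀ * X - (S + X * B) * Rd * (S + X * B)ᵀ + Q = 0)
    (hW : (S + X * B) * Rdᵀ * R = S + X * B) (s : K)
    (hA : IsUnit (s • (1 : Matrix n n K) - A).det)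
    (hA' : IsUnit ((-s) • (1 : Matrix n n K) - Aᵀ).det) :
    popovFunction A Q B S R s
      = (returnDifference A B (Rd * (S + X * B)ᵀ) (-s))ᵀ * R
        * returnDifference A B (Rd * (S + X * B)ᵀ) s := by
  have hQ : Q + (X * A + Aᵀ * X) = (S + X * B) * Rd * (S + X * B)ᵀ := by
    rw [← sub_eq_zero, ← hgcare]
    abel
  rw [← popovFunction_add_lyapunov A Q B S R hX s hA hA', hQ,
    popovFunction_eq_transpose_returnDifference_mul_mul A B _ hR hW]

end PopovFunction

theorem stmt_6_general {K L n m : Type*} [CommRing K] [CommRing L] [Fintype n] [DecidableEq n]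
    [Fintype m] [DecidableEq m] (f : K →+* L)
    (A Q : Matrix n n K) (B S : Matrix n m K) (R : Matrix m m K) (hR : R.IsSymm)
    (Rd : Matrix m m K) (hRd : R * Rd * R = R) (X : Matrix n n K) (hX : X.IsSymm)
    (hgcare : X * A + Aᵀ * X - (S + X * B) * Rd * (S + X * B)ᵀ + Q = 0)
    (hker : ∀ v : m → K, R *ᵥ v = 0 → (S + X * B) *ᵥ v = 0) (s : L)
    (hA : IsUnit (s • (1 : Matrix n n L) - A.map f).det)
    (hA' : IsUnit ((-s) • (1 : Matrix n n L) - (A.map f)ᵀ).det)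
    (hT : IsUnit (returnDifference (A.map f) (B.map f) (Rd.map f * ((S + X * B).map f)ᵀ) s).det)
    (hT' : IsUnit
      (returnDifference (A.map f) (B.map f) (Rd.map f * ((S + X * B).map f)ᵀ) (-s)).det) :
    (popovFunction (A.map f) (Q.map f) (B.map f) (S.map f) (R.map f) s).rank
      = (R.map f).rank := by
  have hRdT : R * Rdᵀ * R = R := by
    simpa [hR.eq, Matrix.mul_assoc] using congrArg transpose hRd
  have hW := mul_mul_eq_of_ker_le hRdT hker
  have hWmap : (S + X * B).map f = S.map f + X.map f * B.map f := by
    rw [Matrix.map_add f (map_add f), Matrix.map_mul]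
  have hgcare' := congrArg (fun M => M.map f) hgcare
  have hW' := congrArg (fun M => M.map f) hW
  simp only [Matrix.map_add f (map_add f), Matrix.map_sub f (map_sub f), Matrix.map_mul,
    transpose_map, Matrix.map_zero f (map_zero f)] at hgcare' hW'
  rw [hWmap] at hT hT'
  rw [popovFunction_factorization (hR.map f) (hX.map f) hgcare' hW' s hA hA',
    rank_mul_eq_left_of_isUnit_det _ _ hT,
    rank_mul_eq_right_of_isUnit_det _ _ (by rwa [det_transpose])]

theorem stmt_6 (n m : ℕ) (hn : 0 < n) (hm : 0 < m)
    (A Q : Matrix (Fin n) (Fin n) ℝ) (B S : Matrix (Fin n) (Fin m) ℝ)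
    (R : Matrix (Fin m) (Fin m) ℝ)
    (hPi : (Matrix.fromBlocks Q S Sᵀ R).PosSemidef)
    (Rd : Matrix (Fin m) (Fin m) ℝ)
    (hRd1 : R * Rd * R = R) (hRd2 : Rd * R * Rd = Rd)
    (hRd3 : (R * Rd)ᵀ = R * Rd) (hRd4 : (Rd * R)ᵀ = Rd * R)
    (X : Matrix (Fin n) (Fin n) ℝ) (hX : Xᵀ = X)
    (hgcare : X * A + Aᵀ * X - (S + X * B) * Rd * (S + X * B)ᵀ + Q = 0)
    (hker : ∀ v : Fin m → ℝ, R.mulVec v = 0 → (S + X * B).mulVec v = 0)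
    (s : ℂ)
    (h1 : IsUnit (s • (1 : Matrix (Fin n) (Fin n) ℂ) - cm A).det)
    (h2 : IsUnit ((-s) • (1 : Matrix (Fin n) (Fin n) ℂ) - (cm A)ᵀ).det)
    (h3 : IsUnit ((1 : Matrix (Fin m) (Fin m) ℂ) + cm Rd * (cm (S + X * B))ᵀ *
        (s • (1 : Matrix (Fin n) (Fin n) ℂ) - cm A)⁻¹ * cm B).det)
    (h4 : IsUnit ((1 : Matrix (Fin m) (Fin m) ℂ) + cm Rd * (cm (S + X * B))ᵀ *
        ((-s) • (1 : Matrix (Fin n) (Fin n) ℂ) - cm A)⁻¹ * cm B).det) :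
    ((cm B)ᵀ * ((-s) • (1 : Matrix (Fin n) (Fin n) ℂ) - (cm A)ᵀ)⁻¹ *
        cm Q * (s • (1 : Matrix (Fin n) (Fin n) ℂ) - cm A)⁻¹ * cm B
      + (cm B)ᵀ * ((-s) • (1 : Matrix (Fin n) (Fin n) ℂ) - (cm A)ᵀ)⁻¹ * cm S
      + (cm S)ᵀ * (s • (1 : Matrix (Fin n) (Fin n) ℂ) - cm A)⁻¹ * cm B
      + cm R).rank = (cm R).rank := by
  have hR : R.IsSymm := (conjTranspose_eq_transpose_of_trivial R).symm.trans
    (isHermitian_fromBlocks_iff.mp hPi.isHermitian).2.2.2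
  exact stmt_6_general Complex.ofRealHom A Q B S R hR Rd hRd1 X hX hgcare hker s h1 h2 h3 h4
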